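/- For every C_k-algebra (A, t): (i) every proper cyclic deductive system of A is the intersection of the maximal cyclic deductive systems containing it; (ii) the intersection of all maximal cyclic deductive systems of A equals {1}. -/

import Mathlib

universe u

/-- Modal pseudocomplemented De Morgan algebra (mpM-algebra). -/
class MpM (A : Type u) extends DistribLattice A, BoundedOrder A where
  dm : A → A   -- De Morgan negation ∼
  ps : A → A   -- pseudocomplement *
  dm_dm : ∀ x : A, dm (dm x) = x
  dm_sup : ∀ x y : A, dm (x ⊔ y) = dm x ⊓ dm y
  pseudo : ∀ a x : A, a ⊓ x = ⊥ ↔ x ≤ ps a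
  modal : ∀ x : A, x ⊔ dm x ≤ x ⊔ ps x

open MpM

variable {A : Type u} [MpM A]

/-- ∇x = ∼(∼x ∧ x*) -/
def nabla (x : A) : A := dm (dm x ⊓ ps x)

/-- △x = ∼∇∼x -/
def tri (x : A) : A := dm (nabla (dm x))

/-- A C_k-algebra structure on an mpM-algebra `A`: an automorphism `t` with `t^k = id`. -/
structure CkStr (A : Type u) [MpM A] (k : ℕ) where
  t : A → A
  bij : Function.Bijective t
  map_inf : ∀ x y : A, t (x ⊓ y) = t x ⊓ t y
  map_sup : ∀ x y : A, t (x ⊔ y) = t x ⊔ t y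
  map_dm : ∀ x : A, t (dm x) = dm (t x)
  map_ps : ∀ x : A, t (ps x) = ps (t x)
  map_bot : t (⊥ : A) = ⊥
  map_top : t (⊤ : A) = ⊤
  periodic : ∀ x : A, t^[k] x = x

/-- Lattice filter: nonempty, upward closed, closed under binary meets. -/
def IsLatFilter (F : Set A) : Prop :=
  F.Nonempty ∧ (∀ x ∈ F, ∀ y : A, x ≤ y → y ∈ F) ∧ ∀ x ∈ F, ∀ y ∈ F, x ⊓ y ∈ F

/-- c-filter: a filter closed under △ and t. -/
def IsCFilter {k : ℕ} (T : CkStr A k) (F : Set A) : Prop :=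
  IsLatFilter F ∧ ∀ x ∈ F, tri x ∈ F ∧ T.t x ∈ F

/-- maximal c-filter: proper and not properly contained in a proper c-filter. -/
def IsMaxCFilter {k : ℕ} (T : CkStr A k) (N : Set A) : Prop :=
  IsCFilter T N ∧ N ≠ Set.univ ∧
    ∀ G : Set A, IsCFilter T G → G ≠ Set.univ → N ⊆ G → N = G

/-- prime filter -/
def IsPrimeFilter (P : Set A) : Prop :=
  IsLatFilter P ∧ P ≠ Set.univ ∧ ∀ x y : A, x ⊔ y ∈ P → x ∈ P ∨ y ∈ P

/-- ultrafilter: maximal proper (lattice) filter -/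
def IsUltraFilter (U : Set A) : Prop :=
  IsLatFilter U ∧ U ≠ Set.univ ∧
    ∀ G : Set A, IsLatFilter G → G ≠ Set.univ → U ⊆ G → U = G

/-- Birula–Rasiowa transformation φ(P) = A \ {∼x : x ∈ P}. -/
def brPhi (P : Set A) : Set A := Set.univ \ (dm '' P)

/-- a ⇁ b = (⋁_{i=1}^{k} ∇(∼ t^i(a))) ∨ b -/
def rimp {k : ℕ} (T : CkStr A k) (a b : A) : A :=
  ((Finset.Icc 1 k).sup fun i => nabla (dm (T.t^[i] a))) ⊔ b

/-- cyclic deductive system -/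
def IsCDS {k : ℕ} (T : CkStr A k) (D : Set A) : Prop :=
  (⊤ : A) ∈ D ∧ ∀ x ∈ D, ∀ y : A, rimp T x y ∈ D → y ∈ D

/-- maximal cyclic deductive system -/
def IsMaxCDS {k : ℕ} (T : CkStr A k) (M : Set A) : Prop :=
  IsCDS T M ∧ M ≠ Set.univ ∧
    ∀ G : Set A, IsCDS T G → G ≠ Set.univ → M ⊆ G → M = G

/-- the smallest cyclic deductive system containing `X` -/
def genCDS {k : ℕ} (T : CkStr A k) (X : Set A) : Set A :=
  ⋂₀ {D : Set A | IsCDS T D ∧ X ⊆ D}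

/-- K(A) = {x : t(x) = x and ∇x = x} -/
def Kset {k : ℕ} (T : CkStr A k) : Set A := {x : A | T.t x = x ∧ nabla x = x}

/-- consistency operator ∘x = ⋀_{i=0}^{k} t^i((∼x ∨ x) ∧ (x ∧ ∼x)*) -/
def cCirc {k : ℕ} (T : CkStr A k) (x : A) : A :=
  (Finset.Icc 0 k).inf fun i => T.t^[i] ((dm x ⊔ x) ⊓ ps (x ⊓ dm x))

/-- x → y = ∼((∼(x∨y))* ∧ (x∨y)) ∨ ((∼(x∧y))* ∧ (x∧y)) -/
def mpTo (x y : A) : A :=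
  dm (ps (dm (x ⊔ y)) ⊓ (x ⊔ y)) ⊔ (ps (dm (x ⊓ y)) ⊓ (x ⊓ y))

/-- x ⇒ y = (x → y) ∧ (∼y → ∼x) -/
def mpIff (x y : A) : A := mpTo x y ⊓ mpTo (dm y) (dm x)

/-!
A set of formulas closed under modus ponens for an implication obeying the axioms `K`, `S` and
Peirce's law behaves as a theory of classical logic: if `M` is maximal among the deductive systems
avoiding `a`, then `{z | (a → y) → z ∈ M}` avoids `a` by Peirce's law, so `a → y ∈ M` for every
`y`, and hence any deductive system properly containing `M`, which must contain `a`, is everything.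
So such an `M` is maximal outright, and by Zorn's lemma every point outside a deductive system is
excluded by a maximal one.

For a `C_k`-algebra, `□x = ⋀ △(tⁱ x)` is the greatest element of the Boolean algebra `K(A)` below
`x`, and `a ⇁ b = ∼□a ∨ b`. Hence `c ≤ a ⇁ b ↔ c ∧ □a ≤ b`, from which the three axioms follow.
-/

section DeductiveSystem

variable {α : Type*} {imp : α → α → α} {one : α}

/-- Subsets containing the truth value `one` and closed under modus ponens for `imp`: the
deductive systems of an arbitrary implication, of which `IsCDS T` is the case of `rimp T`. -/
def IsDeductiveSystem (imp : α → α → α) (one : α) (D : Set α) : Prop :=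
  one ∈ D ∧ ∀ x ∈ D, ∀ y, imp x y ∈ D → y ∈ D

/-- Maximal proper deductive systems, the abstract counterpart of `IsMaxCDS`. -/
def IsMaxDeductiveSystem (imp : α → α → α) (one : α) (M : Set α) : Prop :=
  Maximal (fun D ↦ IsDeductiveSystem imp one D ∧ D ≠ Set.univ) M

/-- The purely implicational fragment of classical logic, read as equations `_ = one`: the axioms
`K` and `S` together with Peirce's law. It isolates what semisimplicity requires of an
implication. -/
structure IsClassicalImp (imp : α → α → α) (one : α) : Prop where
  imp_imp_self : ∀ a b, imp a (imp b a) = one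
  imp_distrib : ∀ a b c, imp (imp a (imp b c)) (imp (imp a b) (imp a c)) = one
  peirce : ∀ a b, imp (imp (imp a b) a) a = one

namespace IsDeductiveSystem

variable {D : Set α}

theorem mem_of_imp_eq_one (hD : IsDeductiveSystem imp one D) {x y : α} (hx : x ∈ D)
    (hxy : imp x y = one) : y ∈ D :=
  hD.2 x hx y (hxy ▸ hD.1)

theorem imp_mem (hD : IsDeductiveSystem imp one D) (h : IsClassicalImp imp one) {x : α}
    (hx : x ∈ D) (a : α) : imp a x ∈ D :=
  hD.mem_of_imp_eq_one hx (h.imp_imp_self x a)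

theorem imp_mem_of_imp_imp_mem (hD : IsDeductiveSystem imp one D) (h : IsClassicalImp imp one)
    {a x y : α} (hxy : imp a (imp x y) ∈ D) (hx : imp a x ∈ D) : imp a y ∈ D :=
  hD.2 _ hx _ (hD.mem_of_imp_eq_one hxy (h.imp_distrib a x y))

theorem imp_self_mem (hD : IsDeductiveSystem imp one D) (h : IsClassicalImp imp one) (a : α) :
    imp a a ∈ D :=
  have mem_of_eq_one {x : α} (hx : x = one) : x ∈ D := hx ▸ hD.1
  hD.imp_mem_of_imp_imp_mem h (x := imp a a) (mem_of_eq_one (h.imp_imp_self a (imp a a)))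
    (mem_of_eq_one (h.imp_imp_self a a))

theorem setOf_imp_mem (hD : IsDeductiveSystem imp one D) (h : IsClassicalImp imp one) (a : α) :
    IsDeductiveSystem imp one {y | imp a y ∈ D} :=
  ⟨hD.imp_mem h hD.1 a, fun _ hx _ hxy ↦ hD.imp_mem_of_imp_imp_mem h hxy hx⟩

theorem sUnion_of_isChain {c : Set (Set α)} (hc : IsChain (· ⊆ ·) c) (hne : c.Nonempty)
    (hD : ∀ D ∈ c, IsDeductiveSystem imp one D) : IsDeductiveSystem imp one (⋃₀ c) := by
  refine ⟨?_, ?_⟩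
  · obtain ⟨D, hDc⟩ := hne
    exact ⟨D, hDc, (hD D hDc).1⟩
  · rintro x ⟨D, hDc, hx⟩ y ⟨E, hEc, hxy⟩
    rcases hc.total hDc hEc with hDE | hED
    · exact ⟨E, hEc, (hD E hEc).2 x (hDE hx) y hxy⟩
    · exact ⟨D, hDc, (hD D hDc).2 x hx y (hED hxy)⟩

theorem exists_maximal_notMem (hD : IsDeductiveSystem imp one D) {a : α} (ha : a ∉ D) :
    ∃ M, D ⊆ M ∧ Maximal (fun E ↦ IsDeductiveSystem imp one E ∧ a ∉ E) M := by
  refine zorn_subset_nonempty {E | IsDeductiveSystem imp one E ∧ a ∉ E} ?_ D ⟨hD, ha⟩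
  intro c hcS hc hne
  refine ⟨⋃₀ c, ⟨sUnion_of_isChain hc hne fun E hE ↦ (hcS hE).1, ?_⟩,
    fun E hE ↦ Set.subset_sUnion_of_mem hE⟩
  rintro ⟨E, hE, haE⟩
  exact (hcS hE).2 haE

end IsDeductiveSystem

namespace IsClassicalImp

variable {D M : Set α} {a : α}

theorem imp_mem_of_maximal_notMem (h : IsClassicalImp imp one)
    (hM : Maximal (fun E ↦ IsDeductiveSystem imp one E ∧ a ∉ E) M) (y : α) : imp a y ∈ M := by
  have hMd : IsDeductiveSystem imp one M := hM.prop.1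
  have ha : imp (imp a y) a ∉ M := fun hmem ↦
    hM.prop.2 (hMd.mem_of_imp_eq_one hmem (h.peirce a y))
  have hsub : {z | imp (imp a y) z ∈ M} ⊆ M :=
    hM.le_of_ge ⟨hMd.setOf_imp_mem h (imp a y), ha⟩ fun _ hz ↦ hMd.imp_mem h hz (imp a y)
  exact hsub (hMd.imp_self_mem h (imp a y))

theorem isMaxDeductiveSystem_of_maximal_notMem (h : IsClassicalImp imp one)
    (hM : Maximal (fun E ↦ IsDeductiveSystem imp one E ∧ a ∉ E) M) :
    IsMaxDeductiveSystem imp one M := by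
  refine ⟨⟨hM.prop.1, fun hM' ↦ hM.prop.2 (hM' ▸ Set.mem_univ a)⟩, fun E ⟨hE, hEne⟩ hME ↦ ?_⟩
  refine hM.le_of_ge ⟨hE, fun haE ↦ hEne ?_⟩ hME
  exact Set.eq_univ_of_forall fun y ↦ hE.2 a haE y (hME (h.imp_mem_of_maximal_notMem hM y))

theorem eq_sInter_isMaxDeductiveSystem (h : IsClassicalImp imp one)
    (hD : IsDeductiveSystem imp one D) :
    D = ⋂₀ {M | IsMaxDeductiveSystem imp one M ∧ D ⊆ M} := by
  refine Set.Subset.antisymm (Set.subset_sInter fun M hM ↦ hM.2) fun a ha ↦ ?_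
  by_contra haD
  obtain ⟨M, hDM, hM⟩ := hD.exists_maximal_notMem haD
  exact hM.prop.2 (ha M ⟨h.isMaxDeductiveSystem_of_maximal_notMem hM, hDM⟩)

theorem sInter_isMaxDeductiveSystem_eq_singleton (h : IsClassicalImp imp one)
    (hone : ∀ a, imp one a = one → a = one) :
    ⋂₀ {M | IsMaxDeductiveSystem imp one M} = {one} := by
  have hsingleton : IsDeductiveSystem imp one {one} := by
    refine ⟨rfl, ?_⟩
    rintro _ rfl y hy
    exact hone y hy
  have hmem (M : Set α) (hM : IsMaxDeductiveSystem imp one M) : {one} ⊆ M :=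
    Set.singleton_subset_iff.2 hM.prop.1.1
  rw [h.eq_sInter_isMaxDeductiveSystem hsingleton]
  congr 1
  ext M
  exact ⟨fun hM ↦ ⟨hM, hmem M hM⟩, And.left⟩

end IsClassicalImp

end DeductiveSystem

namespace MpM

variable {x y : A}

theorem dm_inf (x y : A) : dm (x ⊓ y) = dm x ⊔ dm y := by
  rw [← dm_dm (dm x ⊔ dm y), dm_sup, dm_dm, dm_dm]

theorem dm_antitone : Antitone (dm : A → A) := fun x y hxy ↦ by
  rw [← inf_eq_right, ← dm_sup, sup_eq_right.2 hxy]

theorem dm_le_comm : dm x ≤ y ↔ dm y ≤ x :=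
  ⟨fun h ↦ by simpa only [dm_dm] using dm_antitone h,
    fun h ↦ by simpa only [dm_dm] using dm_antitone h⟩

theorem dm_top : dm (⊤ : A) = ⊥ :=
  le_bot_iff.1 (dm_le_comm.1 le_top)

theorem dm_bot : dm (⊥ : A) = ⊤ := by
  rw [← dm_top, dm_dm]

theorem dm_finset_inf {ι : Type*} (s : Finset ι) (f : ι → A) :
    dm (s.inf f) = s.sup fun i ↦ dm (f i) := by
  induction s using Finset.cons_induction with
  | empty => rw [Finset.inf_empty, Finset.sup_empty, dm_top]
  | cons i s _ ih => rw [Finset.inf_cons, Finset.sup_cons, dm_inf, ih]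

theorem isCompl_dm_of_disjoint (h : Disjoint x (dm x)) : IsCompl x (dm x) := by
  refine ⟨h, codisjoint_iff.2 ?_⟩
  rw [← dm_bot, ← h.eq_bot, dm_inf, dm_dm, sup_comm]

theorem disjoint_iff_le_ps : Disjoint x y ↔ y ≤ ps x :=
  disjoint_iff.trans (pseudo x y)

theorem ps_antitone : Antitone (ps : A → A) := fun _ _ hxy ↦
  disjoint_iff_le_ps.1 ((disjoint_iff_le_ps.2 le_rfl).mono_left hxy)

theorem nabla_eq_sup (x : A) : nabla x = x ⊔ dm (ps x) := by
  rw [nabla, dm_inf, dm_dm]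

theorem nabla_eq_self_iff_disjoint : nabla x = x ↔ Disjoint x (dm x) := by
  rw [nabla_eq_sup, sup_eq_left, dm_le_comm, disjoint_iff_le_ps]

theorem dm_tri (x : A) : dm (tri x) = nabla (dm x) :=
  dm_dm _

theorem tri_eq_inf (x : A) : tri x = x ⊓ ps (dm x) := by
  rw [tri, nabla, dm_dm, dm_dm]

theorem tri_le (x : A) : tri x ≤ x := by
  rw [tri_eq_inf]
  exact inf_le_left

theorem tri_mono : Monotone (tri : A → A) := fun x y hxy ↦ by
  simp only [tri_eq_inf]
  exact inf_le_inf hxy (ps_antitone (dm_antitone hxy))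

theorem disjoint_tri_dm (x : A) : Disjoint (tri x) (dm x) :=
  (disjoint_iff_le_ps.2 (tri_eq_inf x ▸ inf_le_right)).symm

theorem tri_eq_self_of_disjoint (h : Disjoint x (dm x)) : tri x = x := by
  rw [tri_eq_inf, inf_eq_left, ← disjoint_iff_le_ps]
  exact h.symm

theorem inf_dm_ps_dm_le (x : A) : x ⊓ dm (ps (dm x)) ≤ dm x := by
  have hmodal : dm (dm x ⊔ ps (dm x)) ≤ dm (dm x ⊔ dm (dm x)) := dm_antitone (modal (dm x))
  rw [dm_sup, dm_sup, dm_dm] at hmodal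
  exact hmodal.trans inf_le_right

theorem disjoint_tri_dm_tri (x : A) : Disjoint (tri x) (dm (tri x)) := by
  rw [dm_tri, nabla_eq_sup, disjoint_sup_right]
  refine ⟨disjoint_tri_dm x, disjoint_iff_inf_le.2 ?_⟩
  calc tri x ⊓ dm (ps (dm x)) ≤ tri x ⊓ dm x :=
        le_inf inf_le_left ((inf_le_inf_right _ (tri_le x)).trans (inf_dm_ps_dm_le x))
    _ ≤ ⊥ := (disjoint_tri_dm x).le_bot

end MpM

namespace CkStr

variable {k : ℕ} (T : CkStr A k) {x y z : A}

theorem monotone_t : Monotone T.t := fun x y hxy ↦ by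
  rw [← inf_eq_left, ← T.map_inf, inf_eq_left.2 hxy]

theorem map_tri (x : A) : T.t (tri x) = tri (T.t x) := by
  simp only [tri_eq_inf, T.map_inf, T.map_ps, T.map_dm]

theorem mem_Kset_iff : z ∈ Kset T ↔ T.t z = z ∧ Disjoint z (dm z) :=
  and_congr_right' nabla_eq_self_iff_disjoint

theorem top_mem_Kset : (⊤ : A) ∈ Kset T := by
  rw [mem_Kset_iff, dm_top]
  exact ⟨T.map_top, disjoint_bot_right⟩

theorem dm_mem_Kset (hz : z ∈ Kset T) : dm z ∈ Kset T := by
  rw [mem_Kset_iff] at hz ⊢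
  rw [T.map_dm, hz.1, dm_dm]
  exact ⟨rfl, hz.2.symm⟩

theorem inf_mem_Kset (hx : x ∈ Kset T) (hy : y ∈ Kset T) : x ⊓ y ∈ Kset T := by
  rw [mem_Kset_iff] at hx hy ⊢
  rw [T.map_inf, hx.1, hy.1, dm_inf, disjoint_sup_right]
  exact ⟨rfl, hx.2.mono_left inf_le_left, hy.2.mono_left inf_le_right⟩

/-- The operator `□x = ⋀ △(tⁱ x)`, for which `a ⇁ b = ∼□a ∨ b`. The index range `1, …, k` matches
the one in `rimp`. -/
def cyclicTri (x : A) : A :=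
  (Finset.Icc 1 k).inf fun i ↦ tri (T.t^[i] x)

theorem dm_cyclicTri (x : A) :
    dm (T.cyclicTri x) = (Finset.Icc 1 k).sup fun i ↦ nabla (dm (T.t^[i] x)) := by
  simp only [cyclicTri, dm_finset_inf, dm_tri]

theorem disjoint_cyclicTri_dm (x : A) : Disjoint (T.cyclicTri x) (dm (T.cyclicTri x)) := by
  rw [dm_cyclicTri, Finset.disjoint_sup_right]
  intro i hi
  rw [← dm_tri]
  exact (disjoint_tri_dm_tri (T.t^[i] x)).mono_left (Finset.inf_le hi)

theorem cyclicTri_le_tri_iterate (hk : 0 < k) (x : A) (n : ℕ) :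
    T.cyclicTri x ≤ tri (T.t^[n] x) := by
  have hIcc {i : ℕ} (hi : i ∈ Finset.Icc 1 k) : T.cyclicTri x ≤ tri (T.t^[i] x) :=
    Finset.inf_le (f := fun i ↦ tri (T.t^[i] x)) hi
  rw [← Function.IsPeriodicPt.iterate_mod_apply (T.periodic x) n]
  rcases (n % k).eq_zero_or_pos with hn | hn
  · simpa only [hn, Function.iterate_zero_apply, T.periodic x]
      using hIcc (Finset.right_mem_Icc.2 hk)
  · exact hIcc (Finset.mem_Icc.2 ⟨hn, (n.mod_lt hk).le⟩)

theorem cyclicTri_le (hk : 0 < k) (x : A) : T.cyclicTri x ≤ x :=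
  (T.cyclicTri_le_tri_iterate hk x 0).trans (tri_le x)

theorem map_cyclicTri (hk : 0 < k) (x : A) : T.t (T.cyclicTri x) = T.cyclicTri x := by
  have hle : T.cyclicTri x ≤ T.t (T.cyclicTri x) := by
    conv_rhs => rw [cyclicTri, Finset.apply_inf_eq_inf_comp T.t T.map_inf T.map_top]
    refine Finset.le_inf fun i _ ↦ ?_
    rw [Function.comp_apply, map_tri, ← Function.iterate_succ_apply' T.t]
    exact T.cyclicTri_le_tri_iterate hk x (i + 1)
  refine le_antisymm ?_ hle
  calc T.t (T.cyclicTri x) ≤ T.t^[k] (T.cyclicTri x) :=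
        T.monotone_t.monotone_iterate_of_le_map hle hk
    _ = T.cyclicTri x := T.periodic _

theorem cyclicTri_mem_Kset (hk : 0 < k) (x : A) : T.cyclicTri x ∈ Kset T :=
  T.mem_Kset_iff.2 ⟨T.map_cyclicTri hk x, T.disjoint_cyclicTri_dm x⟩

theorem le_cyclicTri (hz : z ∈ Kset T) (hzx : z ≤ x) : z ≤ T.cyclicTri x := by
  rw [mem_Kset_iff] at hz
  refine Finset.le_inf fun i _ ↦ ?_
  calc z = tri (T.t^[i] z) := by rw [Function.iterate_fixed hz.1, tri_eq_self_of_disjoint hz.2]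
    _ ≤ tri (T.t^[i] x) := tri_mono (T.monotone_t.iterate i hzx)

theorem rimp_eq_dm_cyclicTri_sup (x y : A) : rimp T x y = dm (T.cyclicTri x) ⊔ y := by
  rw [rimp, dm_cyclicTri]

theorem le_rimp_iff : z ≤ rimp T x y ↔ z ⊓ T.cyclicTri x ≤ y := by
  rw [rimp_eq_dm_cyclicTri_sup, sup_comm]
  exact (isCompl_dm_of_disjoint (T.disjoint_cyclicTri_dm x)).le_sup_right_iff_inf_left_le

theorem rimp_eq_top_iff : rimp T x y = ⊤ ↔ T.cyclicTri x ≤ y := by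
  rw [← top_le_iff, le_rimp_iff, top_inf_eq]

theorem cyclicTri_rimp_inf_le (hk : 0 < k) (x y : A) :
    T.cyclicTri (rimp T x y) ⊓ T.cyclicTri x ≤ y :=
  T.le_rimp_iff.1 (T.cyclicTri_le hk _)

theorem cyclicTri_rimp_inf_le_cyclicTri (hk : 0 < k) (x y : A) :
    T.cyclicTri (rimp T x y) ⊓ T.cyclicTri x ≤ T.cyclicTri y :=
  T.le_cyclicTri (T.inf_mem_Kset (T.cyclicTri_mem_Kset hk _) (T.cyclicTri_mem_Kset hk _))
    (T.cyclicTri_rimp_inf_le hk x y)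

theorem rimp_imp_self (hk : 0 < k) (x y : A) : rimp T x (rimp T y x) = ⊤ :=
  T.rimp_eq_top_iff.2 (T.le_rimp_iff.2 (inf_le_left.trans (T.cyclicTri_le hk x)))

theorem rimp_distrib (hk : 0 < k) (x y z : A) :
    rimp T (rimp T x (rimp T y z)) (rimp T (rimp T x y) (rimp T x z)) = ⊤ := by
  rw [rimp_eq_top_iff, le_rimp_iff, le_rimp_iff, inf_assoc]
  set w := T.cyclicTri (rimp T x (rimp T y z))
  have hy : T.cyclicTri (rimp T x y) ⊓ T.cyclicTri x ≤ T.cyclicTri x ⊓ T.cyclicTri y :=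
    le_inf inf_le_right (T.cyclicTri_rimp_inf_le_cyclicTri hk x y)
  calc w ⊓ (T.cyclicTri (rimp T x y) ⊓ T.cyclicTri x)
      ≤ w ⊓ (T.cyclicTri x ⊓ T.cyclicTri y) := inf_le_inf_left w hy
    _ = w ⊓ T.cyclicTri x ⊓ T.cyclicTri y := (inf_assoc _ _ _).symm
    _ ≤ z := T.le_rimp_iff.1 (T.cyclicTri_rimp_inf_le hk x (rimp T y z))

theorem rimp_peirce (hk : 0 < k) (x y : A) : rimp T (rimp T (rimp T x y) x) x = ⊤ := by
  have hdm : dm (T.cyclicTri x) ≤ T.cyclicTri (rimp T x y) :=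
    T.le_cyclicTri (T.dm_mem_Kset (T.cyclicTri_mem_Kset hk x))
      (T.rimp_eq_dm_cyclicTri_sup x y ▸ le_sup_left)
  have hle : rimp T (rimp T x y) x ≤ x := by
    rw [T.rimp_eq_dm_cyclicTri_sup (rimp T x y)]
    exact sup_le ((dm_le_comm.1 hdm).trans (T.cyclicTri_le hk x)) le_rfl
  exact T.rimp_eq_top_iff.2 ((T.cyclicTri_le hk _).trans hle)

theorem isClassicalImp_rimp (hk : 0 < k) : IsClassicalImp (rimp T) ⊤ :=
  ⟨T.rimp_imp_self hk, T.rimp_distrib hk, T.rimp_peirce hk⟩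

theorem eq_top_of_top_rimp_eq_top (h : rimp T ⊤ x = ⊤) : x = ⊤ :=
  top_le_iff.1 ((T.le_cyclicTri T.top_mem_Kset le_rfl).trans (T.rimp_eq_top_iff.1 h))

theorem isMaxCDS_iff_isMaxDeductiveSystem {M : Set A} :
    IsMaxCDS T M ↔ IsMaxDeductiveSystem (rimp T) ⊤ M :=
  ⟨fun ⟨hM, hne, hmax⟩ ↦ ⟨⟨hM, hne⟩, fun G hG hMG ↦ (hmax G hG.1 hG.2 hMG).ge⟩,
    fun hM ↦ ⟨hM.prop.1, hM.prop.2, fun _ hG hne hMG ↦ hM.eq_of_subset ⟨hG, hne⟩ hMG⟩⟩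

end CkStr

theorem stmt9 {k : ℕ} (hk : 0 < k) (T : CkStr A k) :
    (∀ D : Set A, IsCDS T D → D ≠ Set.univ →
      D = ⋂₀ {M : Set A | IsMaxCDS T M ∧ D ⊆ M}) ∧
    ⋂₀ {M : Set A | IsMaxCDS T M} = {(⊤ : A)} := by
  have hT : IsClassicalImp (rimp T) ⊤ := T.isClassicalImp_rimp hk
  simp only [T.isMaxCDS_iff_isMaxDeductiveSystem]
  exact ⟨fun D hD _ ↦ hT.eq_sInter_isMaxDeductiveSystem hD,
    hT.sInter_isMaxDeductiveSystem_eq_singleton fun _ ↦ T.eq_top_of_top_rimp_eq_top⟩
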